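/- Let A ∈ ℝ^{n×d} have full column rank with condition number κ(A) = σ_max(A)/σ_min(A), let b ∈ ℝⁿ, and define OPT = min_{x ∈ ℝ^d} ‖A AᵀA x − b‖₂. Let ε₃ ∈ (0,1), ε₁ ≤ ε₃/10, and ε₂ ≤ ε₃/κ(A). Suppose y' ∈ ℝ^d satisfies ‖Ay' − b‖₂ ≤ (1+ε₁)·min_{y ∈ ℝ^d} ‖Ay − b‖₂ and x' ∈ ℝ^d satisfies ‖AᵀA x' − y'‖₂ ≤ ε₂ ‖y'‖₂. Then ‖A AᵀA x' − b‖₂ ≤ (1+ε₃)·OPT + ε₃·‖b‖₂. -/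

import Mathlib

open Matrix
open scoped BigOperators

/-- The Euclidean (`ℓ₂`) norm of a vector in `ℝ^n`. -/
noncomputable def vnorm {n : ℕ} (v : Fin n → ℝ) : ℝ :=
  Real.sqrt (∑ i, v i ^ 2)

/-- The minimum singular value `σ_min(A) = min_{‖x‖₂ = 1} ‖Ax‖₂`. -/
noncomputable def sigmaMin {n d : ℕ} (A : Matrix (Fin n) (Fin d) ℝ) : ℝ :=
  sInf {c : ℝ | ∃ x : Fin d → ℝ, vnorm x = 1 ∧ c = vnorm (A.mulVec x)}

/-- The maximum singular value (spectral / operator norm)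
`σ_max(A) = ‖A‖ = max_{‖x‖₂ = 1} ‖Ax‖₂`. -/
noncomputable def sigmaMax {n d : ℕ} (A : Matrix (Fin n) (Fin d) ℝ) : ℝ :=
  sSup {c : ℝ | ∃ x : Fin d → ℝ, vnorm x = 1 ∧ c = vnorm (A.mulVec x)}

/-- The condition number `κ(A) = σ_max(A) / σ_min(A)`. -/
noncomputable def kappa {n d : ℕ} (A : Matrix (Fin n) (Fin d) ℝ) : ℝ :=
  sigmaMax A / sigmaMin A

/-!
Let `P` be the orthogonal projection onto the range of `A`, so that `O = ‖b - P b‖` is the optimal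
residual of `min_y ‖A y - b‖`. By Pythagoras, `‖A y' - b‖ ≤ ρ O` forces
`‖A y' - P b‖ ≤ √(ρ² - 1) O`, and therefore `‖A y'‖ ≤ ‖b‖ + √(ρ² - 1) O`. The residual `e` of the
second regression satisfies `‖A e‖ ≤ ε₃ ‖A y'‖`, because passing from `‖e‖ ≤ ε₂ ‖y'‖` to the images
under `A` costs at most a factor `κ(A)`. The triangle inequality adds up the two errors.
-/

section OrthogonalProjection

variable {𝕜 E : Type*} [RCLike 𝕜] [NormedAddCommGroup E] [InnerProductSpace 𝕜 E]
  (K : Submodule 𝕜 E) [K.HasOrthogonalProjection] {v : E}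

lemma norm_sub_sq_eq_add_norm_sub_starProjection_sq (hv : v ∈ K) (b : E) :
    ‖v - b‖ ^ 2 = ‖v - K.starProjection b‖ ^ 2 + ‖b - K.starProjection b‖ ^ 2 := by
  have hPv : K.starProjection v = v := K.starProjection_eq_self_iff.mpr hv
  have hrejection : v - b - K.starProjection (v - b) = -(b - K.starProjection b) := by
    rw [map_sub, hPv]; abel
  rw [K.norm_sq_eq_add_norm_sq_starProjection, K.starProjection_orthogonal_val, hrejection,
    norm_neg, map_sub, hPv]

lemma norm_sub_starProjection_le_of_norm_sub_le (hv : v ∈ K) {b : E} {ρ : ℝ}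
    (h : ‖v - b‖ ≤ ρ * ‖b - K.starProjection b‖) :
    ‖v - K.starProjection b‖ ≤ √(ρ ^ 2 - 1) * ‖b - K.starProjection b‖ := by
  have hsq : ‖v - b‖ ^ 2 ≤ (ρ * ‖b - K.starProjection b‖) ^ 2 := by gcongr
  rw [norm_sub_sq_eq_add_norm_sub_starProjection_sq K hv] at hsq
  calc ‖v - K.starProjection b‖
      ≤ √((ρ ^ 2 - 1) * ‖b - K.starProjection b‖ ^ 2) := Real.le_sqrt_of_sq_le (by linarith)
    _ = √(ρ ^ 2 - 1) * ‖b - K.starProjection b‖ := by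
      rw [Real.sqrt_mul' _ (sq_nonneg _), Real.sqrt_sq (norm_nonneg _)]

lemma norm_le_of_norm_sub_le_mul_norm_sub_starProjection (hv : v ∈ K) {b : E} {ρ : ℝ}
    (h : ‖v - b‖ ≤ ρ * ‖b - K.starProjection b‖) :
    ‖v‖ ≤ ‖b‖ + √(ρ ^ 2 - 1) * ‖b - K.starProjection b‖ :=
  calc ‖v‖ ≤ ‖K.starProjection b‖ + ‖v - K.starProjection b‖ := norm_le_insert' _ _
    _ ≤ ‖b‖ + √(ρ ^ 2 - 1) * ‖b - K.starProjection b‖ :=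
      add_le_add (K.norm_starProjection_apply_le b)
        (norm_sub_starProjection_le_of_norm_sub_le K hv h)

end OrthogonalProjection

lemma vnorm_eq_norm_toLp {n : ℕ} (v : Fin n → ℝ) : vnorm v = ‖WithLp.toLp 2 v‖ := by
  simp [vnorm, EuclideanSpace.norm_eq]

lemma vnorm_nonneg {n : ℕ} (v : Fin n → ℝ) : 0 ≤ vnorm v := Real.sqrt_nonneg _

lemma vnorm_add_le {n : ℕ} (v w : Fin n → ℝ) : vnorm (v + w) ≤ vnorm v + vnorm w := by
  simp only [vnorm_eq_norm_toLp, WithLp.toLp_add, norm_add_le]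

lemma vnorm_smul {n : ℕ} (c : ℝ) (v : Fin n → ℝ) : vnorm (c • v) = |c| * vnorm v := by
  simp only [vnorm_eq_norm_toLp, WithLp.toLp_smul, norm_smul, Real.norm_eq_abs]

lemma vnorm_eq_zero {n : ℕ} {v : Fin n → ℝ} : vnorm v = 0 ↔ v = 0 := by
  rw [vnorm_eq_norm_toLp, norm_eq_zero, WithLp.toLp_eq_zero]

section SingularValues

variable {n d : ℕ} (A : Matrix (Fin n) (Fin d) ℝ)

lemma exists_vnorm_eq_one_and_vnorm_mulVec_eq {x : Fin d → ℝ} (hx : x ≠ 0) :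
    ∃ u, vnorm u = 1 ∧ vnorm (A *ᵥ x) = vnorm (A *ᵥ u) * vnorm x := by
  have hne : vnorm x ≠ 0 := mt vnorm_eq_zero.mp hx
  have habs : |(vnorm x)⁻¹| = (vnorm x)⁻¹ := abs_of_nonneg (inv_nonneg.mpr (vnorm_nonneg x))
  refine ⟨(vnorm x)⁻¹ • x, ?_, ?_⟩
  · rw [vnorm_smul, habs, inv_mul_cancel₀ hne]
  · rw [mulVec_smul, vnorm_smul, habs, mul_right_comm, inv_mul_cancel₀ hne, one_mul]

lemma bddAbove_vnorm_mulVec_unit :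
    BddAbove {c : ℝ | ∃ x : Fin d → ℝ, vnorm x = 1 ∧ c = vnorm (A *ᵥ x)} := by
  refine ⟨‖A.toEuclideanLin.toContinuousLinearMap‖, ?_⟩
  rintro _ ⟨x, hx, rfl⟩
  rw [vnorm_eq_norm_toLp] at hx ⊢
  simpa [hx] using A.toEuclideanLin.toContinuousLinearMap.le_opNorm (WithLp.toLp 2 x)

lemma sigmaMax_nonneg : 0 ≤ sigmaMax A :=
  Real.sSup_nonneg fun _ ⟨_, _, hc⟩ => hc ▸ vnorm_nonneg _

lemma sigmaMin_nonneg : 0 ≤ sigmaMin A :=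
  Real.sInf_nonneg fun _ ⟨_, _, hc⟩ => hc ▸ vnorm_nonneg _

lemma vnorm_mulVec_le_sigmaMax_mul (x : Fin d → ℝ) :
    vnorm (A *ᵥ x) ≤ sigmaMax A * vnorm x := by
  rcases eq_or_ne x 0 with rfl | hx
  · simp [vnorm]
  · obtain ⟨u, hu, hAx⟩ := exists_vnorm_eq_one_and_vnorm_mulVec_eq A hx
    rw [hAx]
    exact mul_le_mul_of_nonneg_right
      (le_csSup (bddAbove_vnorm_mulVec_unit A) ⟨u, hu, rfl⟩) (vnorm_nonneg x)

lemma sigmaMin_mul_le_vnorm_mulVec (x : Fin d → ℝ) :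
    sigmaMin A * vnorm x ≤ vnorm (A *ᵥ x) := by
  rcases eq_or_ne x 0 with rfl | hx
  · simp [vnorm]
  · obtain ⟨u, hu, hAx⟩ := exists_vnorm_eq_one_and_vnorm_mulVec_eq A hx
    have hbdd : BddBelow {c : ℝ | ∃ x : Fin d → ℝ, vnorm x = 1 ∧ c = vnorm (A *ᵥ x)} :=
      ⟨0, fun _ ⟨_, _, hc⟩ => hc ▸ vnorm_nonneg _⟩
    rw [hAx]
    exact mul_le_mul_of_nonneg_right (csInf_le hbdd ⟨u, hu, rfl⟩) (vnorm_nonneg x)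

-- With `x / 0 = 0`, `ε' / (σ_max / σ_min) = ε' * σ_min / σ_max` holds even for `σ_min = 0`.
lemma mul_sigmaMax_le_mul_sigmaMin_of_le_div_kappa {ε ε' : ℝ} (hε' : 0 ≤ ε')
    (h : ε ≤ ε' / kappa A) : ε * sigmaMax A ≤ ε' * sigmaMin A := by
  rw [kappa, div_div_eq_mul_div] at h
  exact mul_le_of_le_div₀ (mul_nonneg hε' (sigmaMin_nonneg A)) (sigmaMax_nonneg A) h

lemma vnorm_mulVec_le_mul_vnorm_mulVec {ε ε' : ℝ} (hε' : 0 ≤ ε')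
    (hσ : ε * sigmaMax A ≤ ε' * sigmaMin A) {e y : Fin d → ℝ} (he : vnorm e ≤ ε * vnorm y) :
    vnorm (A *ᵥ e) ≤ ε' * vnorm (A *ᵥ y) :=
  calc vnorm (A *ᵥ e) ≤ sigmaMax A * vnorm e := vnorm_mulVec_le_sigmaMax_mul A e
    _ ≤ sigmaMax A * (ε * vnorm y) := mul_le_mul_of_nonneg_left he (sigmaMax_nonneg A)
    _ = ε * sigmaMax A * vnorm y := by ring
    _ ≤ ε' * sigmaMin A * vnorm y := mul_le_mul_of_nonneg_right hσ (vnorm_nonneg y)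
    _ = ε' * (sigmaMin A * vnorm y) := mul_assoc _ _ _
    _ ≤ ε' * vnorm (A *ᵥ y) := mul_le_mul_of_nonneg_left (sigmaMin_mul_le_vnorm_mulVec A y) hε'

end SingularValues

section LeastSquares

variable {n d : ℕ} (A : Matrix (Fin n) (Fin d) ℝ) (b : Fin n → ℝ)

/-- The optimal value `min_y ‖A y - b‖₂` of the least squares problem, as an infimum. -/
noncomputable def leastResidual : ℝ :=
  sInf {c : ℝ | ∃ y : Fin d → ℝ, c = vnorm (A *ᵥ y - b)}

lemma leastResidual_nonneg : 0 ≤ leastResidual A b :=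
  Real.sInf_nonneg fun _ ⟨_, hc⟩ => hc ▸ vnorm_nonneg _

lemma leastResidual_le_leastResidual_mul {k : ℕ} (B : Matrix (Fin d) (Fin k) ℝ) :
    leastResidual A b ≤ leastResidual (A * B) b := by
  refine csInf_le_csInf ⟨0, fun _ ⟨_, hc⟩ => hc ▸ vnorm_nonneg _⟩ ⟨_, 0, rfl⟩ ?_
  rintro _ ⟨x, rfl⟩
  exact ⟨B *ᵥ x, by rw [mulVec_mulVec]⟩

lemma leastResidual_eq_norm_sub_starProjection :
    leastResidual A b = ‖WithLp.toLp 2 b -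
      (LinearMap.range A.toEuclideanLin).starProjection (WithLp.toLp 2 b)‖ := by
  have hnorm (y : Fin d → ℝ) : vnorm (A *ᵥ y - b) =
      ‖WithLp.toLp 2 b - A.toEuclideanLin (WithLp.toLp 2 y)‖ := by
    rw [norm_sub_rev, vnorm_eq_norm_toLp, toLpLin_toLp, toLin'_apply, WithLp.toLp_sub]
  rw [Submodule.starProjection_minimal]
  refine congrArg sInf (Set.ext fun c => ⟨?_, ?_⟩)
  · rintro ⟨y, rfl⟩
    exact ⟨⟨_, LinearMap.mem_range_self _ (WithLp.toLp 2 y)⟩, (hnorm y).symm⟩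
  · rintro ⟨⟨_, y, rfl⟩, rfl⟩
    exact ⟨y.ofLp, (hnorm y.ofLp).symm⟩

variable {A b}

lemma vnorm_mulVec_le_of_vnorm_sub_le {y : Fin d → ℝ} {ρ : ℝ}
    (h : vnorm (A *ᵥ y - b) ≤ ρ * leastResidual A b) :
    vnorm (A *ᵥ y) ≤ vnorm b + √(ρ ^ 2 - 1) * leastResidual A b := by
  simp only [leastResidual_eq_norm_sub_starProjection, vnorm_eq_norm_toLp] at h ⊢
  exact norm_le_of_norm_sub_le_mul_norm_sub_starProjection _
    (LinearMap.mem_range_self A.toEuclideanLin (WithLp.toLp 2 y)) h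

end LeastSquares

lemma one_add_div_ten_add_mul_sqrt_le {ε : ℝ} (h₀ : 0 ≤ ε) (h₁ : ε ≤ 1) :
    1 + ε / 10 + ε * √((1 + ε / 10) ^ 2 - 1) ≤ 1 + ε := by
  have hsqrt : √((1 + ε / 10) ^ 2 - 1) ≤ 9 / 10 :=
    Real.sqrt_le_iff.mpr ⟨by norm_num, by nlinarith⟩
  nlinarith

theorem three_matrix_regression_error_general {n d k : ℕ} (A : Matrix (Fin n) (Fin d) ℝ)
    (B : Matrix (Fin d) (Fin k) ℝ) (b : Fin n → ℝ) {ε₁ ε₂ ε₃ : ℝ} (hε₁ : 0 ≤ ε₁) (hε₃ : 0 ≤ ε₃)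
    (hσ : ε₂ * sigmaMax A ≤ ε₃ * sigmaMin A) {y' : Fin d → ℝ} {x' : Fin k → ℝ}
    (hy : vnorm (A *ᵥ y' - b) ≤ (1 + ε₁) * leastResidual A b)
    (hx : vnorm (B *ᵥ x' - y') ≤ ε₂ * vnorm y') :
    vnorm ((A * B) *ᵥ x' - b)
      ≤ (1 + ε₁ + ε₃ * √((1 + ε₁) ^ 2 - 1)) * leastResidual (A * B) b + ε₃ * vnorm b := by
  set O := leastResidual A b
  set δ := √((1 + ε₁) ^ 2 - 1)
  have hsplit : (A * B) *ᵥ x' - b = A *ᵥ (B *ᵥ x' - y') + (A *ᵥ y' - b) := by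
    rw [mulVec_sub, mulVec_mulVec, sub_add_sub_cancel]
  have hfactor : 0 ≤ 1 + ε₁ + ε₃ * δ := by positivity
  calc vnorm ((A * B) *ᵥ x' - b)
      ≤ vnorm (A *ᵥ (B *ᵥ x' - y')) + vnorm (A *ᵥ y' - b) := hsplit ▸ vnorm_add_le _ _
    _ ≤ ε₃ * vnorm (A *ᵥ y') + (1 + ε₁) * O :=
      add_le_add (vnorm_mulVec_le_mul_vnorm_mulVec A hε₃ hσ hx) hy
    _ ≤ ε₃ * (vnorm b + δ * O) + (1 + ε₁) * O := by
      gcongr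
      exact vnorm_mulVec_le_of_vnorm_sub_le hy
    _ = (1 + ε₁ + ε₃ * δ) * O + ε₃ * vnorm b := by ring
    _ ≤ (1 + ε₁ + ε₃ * δ) * leastResidual (A * B) b + ε₃ * vnorm b := by
      linarith [mul_le_mul_of_nonneg_left (leastResidual_le_leastResidual_mul A b B) hfactor]

/-- Error guarantee for the three-matrix regression
`min_x ‖A AᵀA x - b‖₂`, solved by first approximately solving `min_y ‖Ay - b‖₂`
(giving `y'`) and then the PSD regression `min_x ‖AᵀAx - y'‖₂` (giving `x'`). -/
theorem three_matrix_regression_error {n d : ℕ} (A : Matrix (Fin n) (Fin d) ℝ)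
    (hrank : A.rank = d) (b : Fin n → ℝ)
    (ε₁ ε₂ ε₃ : ℝ) (hε₃ : ε₃ ∈ Set.Ioo (0 : ℝ) 1)
    (hε₁ : ε₁ ≤ ε₃ / 10) (hε₂ : ε₂ ≤ ε₃ / kappa A)
    (y' x' : Fin d → ℝ)
    (hy : vnorm (A.mulVec y' - b)
        ≤ (1 + ε₁) * sInf {c : ℝ | ∃ y : Fin d → ℝ, c = vnorm (A.mulVec y - b)})
    (hx : vnorm ((Aᵀ * A).mulVec x' - y') ≤ ε₂ * vnorm y') :
    vnorm ((A * Aᵀ * A).mulVec x' - b)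
      ≤ (1 + ε₃) * sInf {c : ℝ | ∃ x : Fin d → ℝ, c = vnorm ((A * Aᵀ * A).mulVec x - b)}
        + ε₃ * vnorm b := by
  obtain ⟨hpos, hlt⟩ := hε₃
  have hy' : vnorm (A *ᵥ y' - b) ≤ (1 + ε₃ / 10) * leastResidual A b :=
    hy.trans (mul_le_mul_of_nonneg_right (by linarith) (leastResidual_nonneg A b))
  have hσ := mul_sigmaMax_le_mul_sigmaMin_of_le_div_kappa A hpos.le hε₂
  have hfactor := one_add_div_ten_add_mul_sqrt_le hpos.le hlt.le
  rw [Matrix.mul_assoc]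
  exact (three_matrix_regression_error_general A (Aᵀ * A) b (by positivity) hpos.le hσ hy' hx).trans
    (add_le_add_left (mul_le_mul_of_nonneg_right hfactor (leastResidual_nonneg _ b)) _)
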